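/- arXiv:0904.1158 — 5 statements merged into one kernel-verified Lean document; each statement's English description precedes it below -/
import Mathlib

section
/- Let λ ⊇ μ be strict partitions such that the skew shifted Young diagram λ/μ has n cells, and let T be a standard tableau of shape λ/μ. Then the content sequence of T is a splittable tuple in ℕ^n. -/
/-- A strict partition: a strictly decreasing list of positive integers. -/
def StrictPartition (l : List ℕ) : Prop :=
  l.Chain' (· > ·) ∧ ∀ x ∈ l, 0 < x

/-- The shifted Young diagram of a strict partition (0-indexed):
row `r` consists of the cells `(r, j)` with `r ≤ j < r + λ_r`. -/
def shiftedCells (l : List ℕ) : Set (ℕ × ℕ) :=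
  {p : ℕ × ℕ | p.1 ≤ p.2 ∧ p.2 < p.1 + l.getD p.1 0}

/-- `D` is the cell set of a skew shifted Young diagram. -/
def IsSkewShifted (D : Set (ℕ × ℕ)) : Prop :=
  ∃ lam mu : List ℕ, StrictPartition lam ∧ StrictPartition mu ∧
    (∀ r, mu.getD r 0 ≤ lam.getD r 0) ∧ D = shiftedCells lam \ shiftedCells mu

/-- A standard tableau of shape `D` with `n` cells: a bijection from `{1,…,n}`
(i.e. `Fin n`) onto `D` whose labels increase along rows and down columns. -/
def IsStandard {n : ℕ} (D : Set (ℕ × ℕ)) (T : Fin n → ℕ × ℕ) : Prop :=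
  Function.Injective T ∧ Set.range T = D ∧
  (∀ k l : Fin n, (T l).1 = (T k).1 → (T l).2 = (T k).2 + 1 → k < l) ∧
  (∀ k l : Fin n, (T l).1 = (T k).1 + 1 → (T l).2 = (T k).2 → k < l)

/-- The content sequence of a tableau: the content `j − r` of the cell labeled `k`. -/
def contentSeq {n : ℕ} (T : Fin n → ℕ × ℕ) : Fin n → ℕ := fun k => (T k).2 - (T k).1

/-- A tuple `i ∈ ℕ^n` is splittable if whenever `i k = i l` with `k < l`:
if the common value is `0` then `1` occurs strictly between, and if it is `≥ 1`
then both the value minus one and the value plus one occur strictly between. -/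
def Splittable {n : ℕ} (i : Fin n → ℕ) : Prop :=
  ∀ k l : Fin n, k < l → i k = i l →
    (i k = 0 → ∃ a, k < a ∧ a < l ∧ i a = 1) ∧
    (1 ≤ i k → (∃ a, k < a ∧ a < l ∧ i a + 1 = i k) ∧ (∃ a, k < a ∧ a < l ∧ i a = i k + 1))

/-- `j` is obtained from `i` by one admissible simple transposition. -/
def AdmissibleSwap {n : ℕ} (i j : Fin n → ℕ) : Prop :=
  ∃ (k : ℕ) (hk : k + 1 < n),
    i ⟨k, Nat.lt_of_succ_lt hk⟩ ≠ i ⟨k + 1, hk⟩ + 1 ∧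
    i ⟨k + 1, hk⟩ ≠ i ⟨k, Nat.lt_of_succ_lt hk⟩ + 1 ∧
    j = i ∘ Equiv.swap ⟨k, Nat.lt_of_succ_lt hk⟩ ⟨k + 1, hk⟩

/-- Equivalence of tuples under finite chains of admissible transpositions. -/
def EquivTuples {n : ℕ} (i j : Fin n → ℕ) : Prop :=
  Relation.ReflTransGen AdmissibleSwap i j

/-!
Two cells of equal content lie on a common diagonal, so the one with the larger label lies strictly
below and to the right of the other one, `p = (r, j)`. The cells `(r, j + 1)` and `(r + 1, j)` lie
between the two in the product order, hence in the diagram, by convexity, and their labels lie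
between the two labels because labels strictly increase along the product order.
-/

/-- Order-convexity inside the region `{(r, j) | r ≤ j}` of all shifted cells: the property of a
skew shifted diagram that governs its standard tableaux. The intermediate cell `x` has to be assumed
to lie in the region, which is not itself convex in `ℕ × ℕ`. -/
structure IsShiftedConvex (D : Set (ℕ × ℕ)) : Prop where
  row_le_col {p : ℕ × ℕ} : p ∈ D → p.1 ≤ p.2
  mem_of_le_of_le {p q x : ℕ × ℕ} : p ∈ D → q ∈ D → p ≤ x → x ≤ q → x.1 ≤ x.2 → x ∈ D

section StrictPartition

variable {l : List ℕ}

theorem add_getD_le_add_getD_of_isChain (hl : l.IsChain (· > ·)) {a b : ℕ} (hab : a ≤ b)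
    (hb : b < l.length) : b + l.getD b 0 ≤ a + l.getD a 0 := by
  induction b, hab using Nat.le_induction with
  | base => exact le_rfl
  | succ b _ ih =>
    have hb' : b < l.length := Nat.lt_of_succ_lt hb
    have hstep : l.getD (b + 1) 0 < l.getD b 0 := by
      simpa only [List.getD_eq_getElem _ _ hb, List.getD_eq_getElem _ _ hb'] using
        List.isChain_iff_getElem.1 hl b hb
    have := ih hb'
    omega

theorem StrictPartition.mem_shiftedCells_of_le (hl : StrictPartition l) {p q : ℕ × ℕ}
    (hq : q ∈ shiftedCells l) (hpq : p ≤ q) (hp : p.1 ≤ p.2) : p ∈ shiftedCells l := by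
  obtain ⟨hq_plane, hq_row⟩ := hq
  have hlen : q.1 < l.length := by
    by_contra! hlen
    rw [List.getD_eq_default _ _ hlen] at hq_row
    omega
  exact ⟨hp, hpq.2.trans_lt (hq_row.trans_le (add_getD_le_add_getD_of_isChain hl.1 hpq.1 hlen))⟩

theorem StrictPartition.isShiftedConvex_sdiff {lam mu : List ℕ} (hlam : StrictPartition lam)
    (hmu : StrictPartition mu) : IsShiftedConvex (shiftedCells lam \ shiftedCells mu) where
  row_le_col hp := hp.1.1
  mem_of_le_of_le hp hq hpx hxq hx :=
    ⟨hlam.mem_shiftedCells_of_le hq.1 hxq hx,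
      fun hx_mu => hp.2 (hmu.mem_shiftedCells_of_le hx_mu hpx hp.1.1)⟩

end StrictPartition

theorem IsShiftedConvex.eq_right_or_eq_below_of_covBy {D : Set (ℕ × ℕ)} (hD : IsShiftedConvex D)
    {p q : D} (h : p ⋖ q) :
    (q : ℕ × ℕ) = (p.1.1, p.1.2 + 1) ∨ (q : ℕ × ℕ) = (p.1.1 + 1, p.1.2) := by
  have hp := hD.row_le_col p.2
  have hq := hD.row_le_col q.2
  obtain ⟨hrow, hcol⟩ : p.1.1 ≤ q.1.1 ∧ p.1.2 ≤ q.1.2 := h.le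
  have eq_of_between {x : ℕ × ℕ} (hx : x.1 ≤ x.2) (hpx : p.1 < x) (hxq : x ≤ q.1) : q.1 = x := by
    have hxD : x ∈ D := hD.mem_of_le_of_le p.2 q.2 hpx.le hxq hx
    exact (hxq.eq_or_lt.resolve_right fun hlt => h.2 (c := ⟨x, hxD⟩) hpx hlt).symm
  rcases hcol.lt_or_eq with hcol_lt | hcol_eq
  · refine .inl (eq_of_between (by dsimp only; omega) ?_ ⟨hrow, hcol_lt⟩)
    exact Prod.mk_lt_mk_of_le_of_lt le_rfl (Nat.lt_succ_self _)
  · have hrow_lt : p.1.1 < q.1.1 :=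
      hrow.lt_of_ne fun hrow_eq => h.ne (Subtype.ext (Prod.ext hrow_eq hcol_eq))
    refine .inr (eq_of_between (by dsimp only; omega) ?_ ⟨hrow_lt, hcol⟩)
    exact Prod.mk_lt_mk_of_lt_of_le (Nat.lt_succ_self _) le_rfl

namespace IsStandard

variable {n : ℕ} {D : Set (ℕ × ℕ)} {T : Fin n → ℕ × ℕ} {k l : Fin n}

theorem apply_mem (hT : IsStandard D T) (k : Fin n) : T k ∈ D :=
  hT.2.1 ▸ Set.mem_range_self k

theorem lt_of_apply_lt (hT : IsStandard D T) (hD : IsShiftedConvex D) (h : T k < T l) : k < l := by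
  classical
  obtain ⟨hinj, rfl, hright, hbelow⟩ := hT
  let label : Set.range T ≃ Fin n := (Equiv.ofInjective T hinj).symm
  have apply_label (p : Set.range T) : T (label p) = p := Equiv.apply_ofInjective_symm hinj p
  have label_apply (k : Fin n) : label ⟨T k, k, rfl⟩ = k := Equiv.ofInjective_symm_apply hinj k
  have label_strictMono : StrictMono label := by
    refine (strictMono_iff_forall_covBy _).2 fun p q hpq => ?_
    rcases hD.eq_right_or_eq_below_of_covBy hpq with hq | hq
    · exact hright _ _ (by rw [apply_label, apply_label, hq]) (by rw [apply_label, apply_label, hq])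
    · exact hbelow _ _ (by rw [apply_label, apply_label, hq]) (by rw [apply_label, apply_label, hq])
  simpa only [label_apply] using label_strictMono (a := ⟨T k, k, rfl⟩) (b := ⟨T l, l, rfl⟩) h

theorem exists_between (hT : IsStandard D T) (hD : IsShiftedConvex D) {x : ℕ × ℕ} (hx : x.1 ≤ x.2)
    (hkx : T k < x) (hxl : x < T l) : ∃ a, k < a ∧ a < l ∧ T a = x := by
  obtain ⟨a, rfl⟩ : x ∈ Set.range T :=
    hT.2.1 ▸ hD.mem_of_le_of_le (hT.apply_mem k) (hT.apply_mem l) hkx.le hxl.le hx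
  exact ⟨a, hT.lt_of_apply_lt hD hkx, hT.lt_of_apply_lt hD hxl, rfl⟩

theorem row_lt_and_col_lt_of_contentSeq_eq (hT : IsStandard D T) (hD : IsShiftedConvex D)
    (hkl : k < l) (hc : contentSeq T k = contentSeq T l) :
    (T k).1 < (T l).1 ∧ (T k).2 < (T l).2 := by
  have hk := hD.row_le_col (hT.apply_mem k)
  have hl := hD.row_le_col (hT.apply_mem l)
  have not_le : ¬ T l ≤ T k := fun hle =>
    hkl.not_gt (hT.lt_of_apply_lt hD (hle.lt_of_ne (hT.1.ne hkl.ne')))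
  rw [Prod.le_def] at not_le
  simp only [contentSeq] at hc
  omega

theorem exists_between_contentSeq_eq_add_one (hT : IsStandard D T) (hD : IsShiftedConvex D)
    (hkl : k < l) (hc : contentSeq T k = contentSeq T l) :
    ∃ a, k < a ∧ a < l ∧ contentSeq T a = contentSeq T k + 1 := by
  obtain ⟨hrow, hcol⟩ := hT.row_lt_and_col_lt_of_contentSeq_eq hD hkl hc
  have hk := hD.row_le_col (hT.apply_mem k)
  obtain ⟨a, hka, hal, ha⟩ := hT.exists_between hD (x := ((T k).1, (T k).2 + 1))
    (Nat.le_succ_of_le hk) (Prod.lt_iff.2 (.inr ⟨le_rfl, Nat.lt_succ_self _⟩))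
    (Prod.lt_iff.2 (.inl ⟨hrow, hcol⟩))
  exact ⟨a, hka, hal, by simp only [contentSeq, ha]; omega⟩

theorem exists_between_contentSeq_add_one_eq (hT : IsStandard D T) (hD : IsShiftedConvex D)
    (hkl : k < l) (hc : contentSeq T k = contentSeq T l) (hpos : 1 ≤ contentSeq T k) :
    ∃ a, k < a ∧ a < l ∧ contentSeq T a + 1 = contentSeq T k := by
  obtain ⟨hrow, hcol⟩ := hT.row_lt_and_col_lt_of_contentSeq_eq hD hkl hc
  have hk : (T k).1 < (T k).2 := Nat.sub_pos_iff_lt.1 hpos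
  obtain ⟨a, hka, hal, ha⟩ := hT.exists_between hD (x := ((T k).1 + 1, (T k).2)) hk
    (Prod.lt_iff.2 (.inl ⟨Nat.lt_succ_self _, le_rfl⟩)) (Prod.lt_iff.2 (.inr ⟨hrow, hcol⟩))
  exact ⟨a, hka, hal, by simp only [contentSeq, ha]; omega⟩

end IsStandard

theorem content_seq_splittable_general {n : ℕ} {D : Set (ℕ × ℕ)} (hD : IsShiftedConvex D)
    {T : Fin n → ℕ × ℕ} (hT : IsStandard D T) : Splittable (contentSeq T) := by
  intro k l hkl hc
  have succ_between := hT.exists_between_contentSeq_eq_add_one hD hkl hc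
  refine ⟨fun hzero => ?_, fun hpos => ⟨?_, succ_between⟩⟩
  · simpa only [hzero, zero_add] using succ_between
  · exact hT.exists_between_contentSeq_add_one_eq hD hkl hc hpos

/-- the content sequence of a standard tableau of skew shifted
shape with `n` cells is splittable. -/
theorem content_seq_splittable (n : ℕ) (lam mu : List ℕ)
    (hlam : StrictPartition lam) (hmu : StrictPartition mu)
    (hsub : ∀ r, mu.getD r 0 ≤ lam.getD r 0)
    (T : Fin n → ℕ × ℕ)
    (hT : IsStandard (shiftedCells lam \ shiftedCells mu) T) :
    Splittable (contentSeq T) :=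
  content_seq_splittable_general (hlam.isShiftedConvex_sdiff hmu) hT
end

section
/- Let D be the cell set of a skew shifted Young diagram with n cells, let T be a standard tableau of shape D with content sequence i, and let j ∈ ℕ^n with i ∼ j (equivalent under admissible transpositions). Then j is the content sequence of some standard tableau of shape D. -/
/-!
Neighbouring cells of a row or a column have contents differing by exactly one, so an admissible
transposition exchanges two consecutive labels lying in non-adjacent cells. The order of any other
pair of labels is unaffected by exchanging two consecutive ones, so the tableau remains standard.
-/

theorem swap_lt_swap_of_covBy {α : Type*} [LinearOrder α] {a b x y : α} (hab : a ⋖ b)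
    (hxy : x < y) (hne : ¬(x = a ∧ y = b)) : Equiv.swap a b x < Equiv.swap a b y := by
  have hlt : a < b := hab.lt
  have le_of_lt_right {z : α} (hz : z < b) : z ≤ a := hab.le_of_lt hz
  have ge_of_gt_left {z : α} (hz : a < z) : b ≤ z := hab.ge_of_gt hz
  rw [Equiv.swap_apply_def, Equiv.swap_apply_def]
  grind

theorem IsSkewShifted.fst_le_snd {D : Set (ℕ × ℕ)} (hD : IsSkewShifted D) {p : ℕ × ℕ}
    (hp : p ∈ D) : p.1 ≤ p.2 := by
  obtain ⟨lam, mu, -, -, -, rfl⟩ := hD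
  exact hp.1.1

section Tableau

variable {n : ℕ} {D : Set (ℕ × ℕ)} {T : Fin n → ℕ × ℕ} {k l : Fin n}

theorem contentSeq_eq_add_one_of_right (hk : (T k).1 ≤ (T k).2) (hrow : (T l).1 = (T k).1)
    (hcol : (T l).2 = (T k).2 + 1) : contentSeq T l = contentSeq T k + 1 := by
  simp only [contentSeq]
  omega

theorem contentSeq_eq_add_one_of_below (hl : (T l).1 ≤ (T l).2) (hrow : (T l).1 = (T k).1 + 1)
    (hcol : (T l).2 = (T k).2) : contentSeq T k = contentSeq T l + 1 := by
  simp only [contentSeq]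
  omega

theorem IsStandard.comp_swap (hT : IsStandard D T) (hkl : k ⋖ l)
    (hright : ¬((T l).1 = (T k).1 ∧ (T l).2 = (T k).2 + 1))
    (hbelow : ¬((T l).1 = (T k).1 + 1 ∧ (T l).2 = (T k).2)) :
    IsStandard D (T ∘ Equiv.swap k l) := by
  obtain ⟨hinj, hrange, hrows, hcols⟩ := hT
  have lt_of_swap_lt {x y : Fin n} (hxy : Equiv.swap k l x < Equiv.swap k l y)
      (hne : ¬(Equiv.swap k l x = k ∧ Equiv.swap k l y = l)) : x < y := by
    simpa only [Equiv.swap_apply_self] using swap_lt_swap_of_covBy hkl hxy hne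
  refine ⟨hinj.comp (Equiv.injective _), ?_, fun x y hrow hcol ↦ ?_, fun x y hrow hcol ↦ ?_⟩
  · rw [(Equiv.surjective _).range_comp, hrange]
  · refine lt_of_swap_lt (hrows _ _ hrow hcol) fun ⟨hx, hy⟩ ↦ hright ?_
    simpa only [Function.comp_apply, hx, hy] using And.intro hrow hcol
  · refine lt_of_swap_lt (hcols _ _ hrow hcol) fun ⟨hx, hy⟩ ↦ hbelow ?_
    simpa only [Function.comp_apply, hx, hy] using And.intro hrow hcol

theorem exists_isStandard_contentSeq_eq_of_admissibleSwap (hD : ∀ p ∈ D, p.1 ≤ p.2)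
    (hT : IsStandard D T) {j : Fin n → ℕ} (hj : AdmissibleSwap (contentSeq T) j) :
    ∃ S : Fin n → ℕ × ℕ, IsStandard D S ∧ contentSeq S = j := by
  obtain ⟨k, hk, hbelow, hright, rfl⟩ := hj
  have hmem (x : Fin n) : (T x).1 ≤ (T x).2 := hD _ (hT.2.1 ▸ Set.mem_range_self x)
  have hcov : (⟨k, Nat.lt_of_succ_lt hk⟩ : Fin n) ⋖ ⟨k + 1, hk⟩ :=
    Fin.covBy_iff.2 (Order.covBy_add_one k)
  exact ⟨_, hT.comp_swap hcov
    (fun ⟨hrow, hcol⟩ ↦ hright (contentSeq_eq_add_one_of_right (hmem _) hrow hcol))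
    (fun ⟨hrow, hcol⟩ ↦ hbelow (contentSeq_eq_add_one_of_below (hmem _) hrow hcol)), rfl⟩

theorem equiv_tuple_is_content_seq_general (hD : ∀ p ∈ D, p.1 ≤ p.2) (hT : IsStandard D T)
    {j : Fin n → ℕ} (hj : EquivTuples (contentSeq T) j) :
    ∃ S : Fin n → ℕ × ℕ, IsStandard D S ∧ contentSeq S = j := by
  induction hj with
  | refl => exact ⟨T, hT, rfl⟩
  | tail _ hswap ih =>
    obtain ⟨S, hS, rfl⟩ := ih
    exact exists_isStandard_contentSeq_eq_of_admissibleSwap hD hS hswap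

end Tableau

/-- any tuple equivalent under admissible transpositions to the
content sequence of a standard tableau of a skew shifted shape `D` is itself
the content sequence of a standard tableau of shape `D`. -/
theorem equiv_tuple_is_content_seq (n : ℕ) (D : Set (ℕ × ℕ))
    (hD : IsSkewShifted D) (T : Fin n → ℕ × ℕ) (hT : IsStandard D T)
    (j : Fin n → ℕ) (hj : EquivTuples (contentSeq T) j) :
    ∃ S : Fin n → ℕ × ℕ, IsStandard D S ∧ contentSeq S = j :=
  equiv_tuple_is_content_seq_general (fun _ hp ↦ hD.fst_le_snd hp) hT hj
end

section
/- Let X ⊆ ℕ^n be a nonempty set of tuples such that: (i) whenever i ∈ X and the simple transposition s_k is admissible with respect to i, also s_k·i ∈ X; (ii) no i ∈ X has i_k = i_{k+1} for some 1 ≤ k ≤ n−1; (iii) for every i ∈ X and every 1 ≤ k ≤ n−2 with i_k = i_{k+2}, one has i_{k+1} = i_k + 1. Then every i ∈ X has the property: if i_k = i_l with 1 ≤ k < l ≤ n, then i_k + 1 ∈ {i_{k+1},…,i_{l−1}}. -/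
/-!
Take equal entries `i k = i l` with `k < l` as close together as possible among those for which no
successor of `i k` lies strictly between. Moving the entry at `k` one step right, or the one at `l`
one step left, would bring the two closer, so by minimality neither swap is admissible. Hence the
entries at `p = k + 1` and `q = l - 1` both have `i k` as successor, and so are equal. They stand
at distinct positions, since for `p = q` hypothesis (iii) makes the middle entry a successor of
`i k`. By minimality a successor of `i p`, that is, a copy of `i k`, lies between `p` and `q`, and
the closer pair formed by `k` and this copy encloses a successor of `i k`.
-/

/-- `j` is obtained from `i` by swapping the entries at two adjacent positions, provided `r` relates
these entries in neither direction. For `r a b := b = a + 1` on `Fin n → ℕ` this is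
`AdmissibleSwap`. -/
def AdmissibleSwapFor {ι α : Type*} [LinearOrder ι] (r : α → α → Prop) (i j : ι → α) : Prop :=
  ∃ k l : ι, k ⋖ l ∧ ¬ r (i l) (i k) ∧ ¬ r (i k) (i l) ∧ j = i ∘ Equiv.swap k l

/-- Some entry strictly between positions `k` and `l` is an `r`-successor of the entry at `k`. For
`r a b := b = a + 1` this says that `i k + 1` occurs strictly between `k` and `l`. -/
def SuccBetween {ι α : Type*} [LT ι] (r : α → α → Prop) (i : ι → α) (k l : ι) : Prop :=
  ∃ a, k < a ∧ a < l ∧ r (i k) (i a)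

section LinearOrder

variable {ι α : Type*} [LinearOrder ι] {r : α → α → Prop} {i : ι → α} {k l p q : ι}

theorem SuccBetween.of_comp_swap_left (hkp : k < p)
    (h : SuccBetween r (i ∘ Equiv.swap k p) p l) : SuccBetween r i k l := by
  obtain ⟨a, hpa, hal, ha⟩ := h
  have hka : k < a := hkp.trans hpa
  refine ⟨a, hka, hal, ?_⟩
  simpa [Equiv.swap_apply_of_ne_of_ne hka.ne' hpa.ne'] using ha

theorem SuccBetween.of_comp_swap_right (hkq : k < q) (hql : q < l)
    (h : SuccBetween r (i ∘ Equiv.swap q l) k q) : SuccBetween r i k l := by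
  obtain ⟨a, hka, haq, ha⟩ := h
  have hal : a < l := haq.trans hql
  refine ⟨a, hka, hal, ?_⟩
  simpa [Equiv.swap_apply_of_ne_of_ne hkq.ne (hkq.trans hql).ne,
    Equiv.swap_apply_of_ne_of_ne haq.ne hal.ne] using ha

theorem rel_left_of_not_succBetween {X : Set (ι → α)}
    (h_swap : ∀ i ∈ X, ∀ j, AdmissibleSwapFor r i j → j ∈ X)
    (hi : i ∈ X) (hval : i k = i l) (hnot : ¬ SuccBetween r i k l)
    (hkp : k ⋖ p) (hpl : p < l) (h_inner : ∀ j ∈ X, j p = j l → SuccBetween r j p l) :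
    r (i p) (i k) := by
  by_contra hpk
  have hkp_not : ¬ r (i k) (i p) := fun h => hnot ⟨p, hkp.lt, hpl, h⟩
  have hj : i ∘ Equiv.swap k p ∈ X := h_swap i hi _ ⟨k, p, hkp, hpk, hkp_not, rfl⟩
  refine hnot (.of_comp_swap_left hkp.lt (h_inner _ hj ?_))
  simpa [Equiv.swap_apply_of_ne_of_ne (hkp.lt.trans hpl).ne' hpl.ne'] using hval

theorem rel_right_of_not_succBetween {X : Set (ι → α)}
    (h_swap : ∀ i ∈ X, ∀ j, AdmissibleSwapFor r i j → j ∈ X)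
    (hi : i ∈ X) (hval : i k = i l) (hnot : ¬ SuccBetween r i k l)
    (hkq : k < q) (hql : q ⋖ l) (h_inner : ∀ j ∈ X, j k = j q → SuccBetween r j k q) :
    r (i q) (i l) := by
  by_contra hql_not
  have hlq : ¬ r (i l) (i q) := fun h => hnot ⟨q, hkq, hql.lt, hval ▸ h⟩
  have hj : i ∘ Equiv.swap q l ∈ X := h_swap i hi _ ⟨q, l, hql, hlq, hql_not, rfl⟩
  refine hnot (.of_comp_swap_right hkq hql.lt (h_inner _ hj ?_))
  simpa [Equiv.swap_apply_of_ne_of_ne hkq.ne (hkq.trans hql.lt).ne] using hval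

end LinearOrder

theorem between_plus_one_of_closed_set_general {ι α : Type*} [LinearOrder ι] [LocallyFiniteOrder ι]
    {r : α → α → Prop} (hr : Relator.BiUnique r) {X : Set (ι → α)}
    (h_swap : ∀ i ∈ X, ∀ j, AdmissibleSwapFor r i j → j ∈ X)
    (h_adj : ∀ i ∈ X, ∀ k l, k ⋖ l → i k ≠ i l)
    (h_two : ∀ i ∈ X, ∀ k m l, k ⋖ m → m ⋖ l → i k = i l → r (i k) (i m))
    {i : ι → α} (hi : i ∈ X) {k l : ι} (hkl : k < l) (hval : i k = i l) :
    SuccBetween r i k l := by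
  induction hs : Finset.Icc k l using Finset.strongInduction generalizing i k l with
  | H s ih =>
  subst hs
  by_contra hnot
  obtain ⟨p, hkp, hpl_le⟩ := exists_covBy_le_of_lt hkl
  obtain ⟨q, hkq_le, hql⟩ := exists_le_covBy_of_lt hkl
  have hpl : p < l := hpl_le.lt_of_ne fun h => h_adj i hi k l (h ▸ hkp) hval
  have hkq : k < q := hkq_le.lt_of_ne fun h => h_adj i hi k l (h ▸ hql) hval
  have hpk : r (i p) (i k) := rel_left_of_not_succBetween h_swap hi hval hnot hkp hpl
    fun _ hj hj_val => ih _ (Finset.Icc_ssubset_Icc_left hkl.le hkp.lt le_rfl) hj hpl hj_val rfl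
  have hql_rel : r (i q) (i l) := rel_right_of_not_succBetween h_swap hi hval hnot hkq hql
    fun _ hj hj_val => ih _ (Finset.Icc_ssubset_Icc_right hkl.le le_rfl hql.lt) hj hkq hj_val rfl
  have hpq_val : i p = i q := hr.1 hpk (hval ▸ hql_rel)
  have hpq_ne : p ≠ q := by
    rintro rfl
    exact hnot ⟨p, hkp.lt, hpl, h_two i hi k p l hkp hql hval⟩
  have hpq : p < q := (hkp.ge_of_gt hkq).lt_of_ne hpq_ne
  obtain ⟨a, hpa, haq, ha⟩ : SuccBetween r i p q :=
    ih _ (Finset.Icc_ssubset_Icc_left hkl.le hkp.lt hql.le) hi hpq hpq_val rfl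
  have hka : k < a := hkp.lt.trans hpa
  have hal : a < l := haq.trans hql.lt
  have ha_val : i k = i a := hr.2 hpk ha
  obtain ⟨b, hkb, hba, hb⟩ : SuccBetween r i k a :=
    ih _ (Finset.Icc_ssubset_Icc_right hkl.le le_rfl hal) hi hka ha_val rfl
  exact hnot ⟨b, hkb, hba.trans hal, hb⟩

theorem eq_mk_succ_of_covBy {n : ℕ} {k l : Fin n} (h : k ⋖ l) :
    ∃ hk : (k : ℕ) + 1 < n, l = ⟨k + 1, hk⟩ := by
  have hl : (k : ℕ) + 1 = l := Order.covBy_iff_add_one_eq.1 (Fin.covBy_iff.1 h)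
  exact ⟨hl ▸ l.isLt, Fin.ext hl.symm⟩

theorem AdmissibleSwapFor.admissibleSwap {n : ℕ} {i j : Fin n → ℕ}
    (h : AdmissibleSwapFor (fun a b => b = a + 1) i j) : AdmissibleSwap i j := by
  obtain ⟨k, l, hkl, hlk_ne, hkl_ne, rfl⟩ := h
  obtain ⟨hk, rfl⟩ := eq_mk_succ_of_covBy hkl
  exact ⟨k, hk, hlk_ne, hkl_ne, rfl⟩

theorem biUnique_eq_add_one : Relator.BiUnique fun a b : ℕ => b = a + 1 :=
  ⟨fun _ _ _ h h' => Nat.succ_injective (h.symm.trans h'), fun _ _ _ h h' => h.trans h'.symm⟩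

theorem between_plus_one_of_closed_set {n : ℕ} (X : Set (Fin n → ℕ))
    (hne : X.Nonempty)
    (h1 : ∀ i ∈ X, ∀ j, AdmissibleSwap i j → j ∈ X)
    (h2 : ∀ i ∈ X, ∀ (k : ℕ) (hk : k + 1 < n),
      i ⟨k, Nat.lt_of_succ_lt hk⟩ ≠ i ⟨k + 1, hk⟩)
    (h3 : ∀ i ∈ X, ∀ (k : ℕ) (hk : k + 2 < n),
      i ⟨k, by omega⟩ = i ⟨k + 2, hk⟩ →
      i ⟨k + 1, by omega⟩ = i ⟨k, by omega⟩ + 1) :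
    ∀ i ∈ X, ∀ k l : Fin n, k < l → i k = i l →
      ∃ a, k < a ∧ a < l ∧ i a = i k + 1 := by
  intro i hi k l hkl hval
  refine between_plus_one_of_closed_set_general biUnique_eq_add_one
    (fun i hi j h => h1 i hi j h.admissibleSwap) ?_ ?_ hi hkl hval
  · intro i hi k l hkl
    obtain ⟨hk, rfl⟩ := eq_mk_succ_of_covBy hkl
    exact h2 i hi k hk
  · intro i hi k m l hkm hml
    obtain ⟨_, rfl⟩ := eq_mk_succ_of_covBy hkm
    obtain ⟨hl, rfl⟩ := eq_mk_succ_of_covBy hml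
    exact h3 i hi k hl
end

section
/- Let X ⊆ ℕ^n be a nonempty set of tuples such that: (i) whenever i ∈ X and the simple transposition s_k is admissible with respect to i, also s_k·i ∈ X; (ii) no i ∈ X has i_k = i_{k+1} for some 1 ≤ k ≤ n−1; (iii) for every i ∈ X and every 1 ≤ k ≤ n−2 with i_k = i_{k+2}, one has i_k = 0 and i_{k+1} = 1. Then every i ∈ X is splittable. -/
/-!
Let `k < l` and `i k = i l`; induct on the interval `[k, l]`, for all tuples of `X` at once. Suppose
that a neighbor `c` of `i k` is missing in between. Then `i k` does not recur in between either,
since the interval up to that recurrence would already contain `c`. If the entry after `k` is not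
adjacent to `i k`, swapping the two gives a shorter counterexample; the same holds for the entry
before `l`. So both of these entries are neighbors of `i k` other than `c`, hence equal. At distinct
positions they enclose `i k` by induction, a contradiction; if they coincide, then (iii) makes this
entry the only neighbor of `i k`, that is, `c`.

Values are taken to be vertices of a graph whose vertices have at most two neighbors each; for
tuples of natural numbers it is `hasse ℕ`, where `a` and `a + 1` are adjacent.
-/

open Equiv (swap)
open SimpleGraph (hasse hasse_adj)
open Set (Ioo)

section Graph

variable {ι α : Type*} {G : SimpleGraph α} {i : ι → α} {k l m : ι}

/-- The splittability condition at the positions `k` and `l`, for a tuple of vertices of `G`: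
if the entries agree, then all their neighbors occur strictly in between. -/
def SplittableBetween [Preorder ι] (G : SimpleGraph α) (i : ι → α) (k l : ι) : Prop :=
  i k = i l → G.neighborSet (i k) ⊆ i '' Ioo k l

theorem image_comp_swap_of_notMem [DecidableEq ι] {s : Set ι} (hk : k ∉ s) (hl : l ∉ s) :
    i ∘ swap k l '' s = i '' s :=
  Set.image_congr fun _ hm => congrArg i <|
    Equiv.swap_apply_of_ne_of_ne (ne_of_mem_of_not_mem hm hk) (ne_of_mem_of_not_mem hm hl)

variable [LinearOrder ι]

theorem SplittableBetween.of_comp_swap_left (hkm : k < m) (hml : m < l)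
    (h : SplittableBetween G (i ∘ swap k m) m l) : SplittableBetween G i k l := by
  intro heq
  have hm : (i ∘ swap k m) m = i k := congrArg i (Equiv.swap_apply_right k m)
  have hl : (i ∘ swap k m) l = i l :=
    congrArg i (Equiv.swap_apply_of_ne_of_ne (hkm.trans hml).ne' hml.ne')
  have himage : i ∘ swap k m '' Ioo m l = i '' Ioo m l :=
    image_comp_swap_of_notMem (fun hk => hkm.not_gt hk.1) (fun hm => hm.1.false)
  rw [SplittableBetween, hm, hl, himage] at h
  exact (h heq).trans (Set.image_mono (Set.Ioo_subset_Ioo_left hkm.le))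

theorem SplittableBetween.of_comp_swap_right (hkm : k < m) (hml : m < l)
    (h : SplittableBetween G (i ∘ swap m l) k m) : SplittableBetween G i k l := by
  intro heq
  have hk : (i ∘ swap m l) k = i k :=
    congrArg i (Equiv.swap_apply_of_ne_of_ne hkm.ne (hkm.trans hml).ne)
  have hm : (i ∘ swap m l) m = i l := congrArg i (Equiv.swap_apply_left m l)
  have himage : i ∘ swap m l '' Ioo k m = i '' Ioo k m :=
    image_comp_swap_of_notMem (fun hm => hm.2.false) (fun hl => hml.not_gt hl.2)
  rw [SplittableBetween, hk, hm, himage] at h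
  exact (h heq).trans (Set.image_mono (Set.Ioo_subset_Ioo_right hml.le))

theorem eq_of_adj_of_encard_neighborSet_le_two {a b c d : α}
    (hdeg : (G.neighborSet a).encard ≤ 2) (hb : G.Adj a b) (hc : G.Adj a c) (hd : G.Adj a d)
    (hbd : b ≠ d) (hcd : c ≠ d) : b = c := by
  have hcard : (G.neighborSet a \ {d}).encard ≤ 1 := by
    rw [← Set.encard_sdiff_singleton_add_one (show d ∈ G.neighborSet a from hd)] at hdeg
    exact (ENat.add_le_add_iff_right ENat.one_ne_top).1 hdeg
  exact Set.encard_le_one_iff.1 hcard b c ⟨hb, hbd⟩ ⟨hc, hcd⟩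

theorem splittableBetween_of_adj_of_adj {p q : ι} (hdeg : (G.neighborSet (i k)).encard ≤ 2)
    (hkp : k < p) (hpq : p < q) (hql : q < l) (hadjp : G.Adj (i k) (i p))
    (hadjq : G.Adj (i k) (i q)) (hsplit : SplittableBetween G i p q)
    (hinit : ∀ m, k < m → m < l → SplittableBetween G i k m) : SplittableBetween G i k l := by
  intro _ c hc
  by_contra hmissing
  have hpc : i p ≠ c := fun h => hmissing ⟨p, ⟨hkp, hpq.trans hql⟩, h⟩
  have hqc : i q ≠ c := fun h => hmissing ⟨q, ⟨hkp.trans hpq, hql⟩, h⟩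
  have hpq_eq : i p = i q :=
    eq_of_adj_of_encard_neighborSet_le_two hdeg hadjp hadjq hc hpc hqc
  obtain ⟨m, ⟨hpm, hmq⟩, hm⟩ := hsplit hpq_eq hadjp.symm
  have hml : m < l := hmq.trans hql
  obtain ⟨r, ⟨hkr, hrm⟩, hr⟩ := hinit m (hkp.trans hpm) hml hm.symm hc
  exact hmissing ⟨r, ⟨hkr, hrm.trans hml⟩, hr⟩

theorem splittable_of_closed_set_general [LocallyFiniteOrder ι]
    (hdeg : ∀ a, (G.neighborSet a).encard ≤ 2) (X : Set (ι → α))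
    (hswap : ∀ i ∈ X, ∀ k l, k ⋖ l → ¬ G.Adj (i k) (i l) → i ∘ swap k l ∈ X)
    (hne : ∀ i ∈ X, ∀ k l, k ⋖ l → i k ≠ i l)
    (hbraid : ∀ i ∈ X, ∀ k m l, k ⋖ m → m ⋖ l → i k = i l → G.neighborSet (i k) ⊆ {i m}) :
    ∀ i ∈ X, ∀ k l, k < l → SplittableBetween G i k l := by
  intro i hi k l hkl
  induction hs : Finset.Icc k l using Finset.strongInduction generalizing i k l with
  | H s ih =>
  subst hs
  have ih_left : ∀ j ∈ X, ∀ m, k < m → m < l → SplittableBetween G j m l := fun j hj m hkm hml =>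
    ih _ (Finset.Icc_ssubset_Icc_left hkl.le hkm le_rfl) j hj m l hml rfl
  have ih_right : ∀ j ∈ X, ∀ m, k < m → m < l → SplittableBetween G j k m := fun j hj m hkm hml =>
    ih _ (Finset.Icc_ssubset_Icc_right hkl.le le_rfl hml) j hj k m hkm rfl
  by_contra hnot
  have heq : i k = i l := by_contra fun h => hnot fun heq => absurd heq h
  obtain ⟨p, hkp, hpl⟩ := exists_covBy_le_of_lt hkl
  obtain rfl | hpl := hpl.eq_or_lt
  · exact hne i hi k p hkp heq
  obtain ⟨q, hpq, hql⟩ := exists_le_covBy_of_lt hpl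
  have hkq : k < q := hkp.lt.trans_le hpq
  have hadjp : G.Adj (i k) (i p) := by_contra fun h =>
    hnot <| .of_comp_swap_left hkp.lt hpl <| ih_left _ (hswap i hi k p hkp h) p hkp.lt hpl
  have hadjq : G.Adj (i q) (i l) := by_contra fun h =>
    hnot <| .of_comp_swap_right hkq hql.lt <| ih_right _ (hswap i hi q l hql h) q hkq hql.lt
  obtain rfl | hpq := hpq.eq_or_lt
  · refine hnot fun _ => (hbraid i hi k p l hkp hql heq).trans ?_
    exact Set.singleton_subset_iff.2 (Set.mem_image_of_mem i ⟨hkq, hpl⟩)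
  · have hsplit : SplittableBetween G i p q :=
      ih _ (Finset.Icc_ssubset_Icc_left hkl.le hkp.lt hql.le) i hi p q hpq rfl
    have hadjkq : G.Adj (i k) (i q) := heq ▸ hadjq.symm
    exact hnot <| splittableBetween_of_adj_of_adj (hdeg (i k)) hkp.lt hpq hql.lt hadjp hadjkq hsplit
      (ih_right i hi)

end Graph

section Hasse

theorem encard_neighborSet_hasse_le_two {α : Type*} [LinearOrder α] (a : α) :
    ((hasse α).neighborSet a).encard ≤ 2 := by
  have hupper : {b | a ⋖ b}.encard ≤ 1 := Set.encard_le_one_iff.2 fun _ _ => CovBy.unique_right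
  have hlower : {b | b ⋖ a}.encard ≤ 1 := Set.encard_le_one_iff.2 fun _ _ => CovBy.unique_left
  calc ((hasse α).neighborSet a).encard
    _ = ({b | a ⋖ b} ∪ {b | b ⋖ a}).encard := rfl
    _ ≤ {b | a ⋖ b}.encard + {b | b ⋖ a}.encard := Set.encard_union_le _ _
    _ ≤ 1 + 1 := add_le_add hupper hlower
    _ = 2 := one_add_one_eq_two

theorem hasse_nat_adj {a b : ℕ} : (hasse ℕ).Adj a b ↔ b = a + 1 ∨ a = b + 1 := by
  simp only [hasse_adj, Nat.covBy_iff_add_one_eq, eq_comm]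

variable {n : ℕ} {i : Fin n → ℕ} {k l : Fin n}

theorem exists_eq_mk_succ_of_covBy (hkl : k ⋖ l) : ∃ h : (k : ℕ) + 1 < n, l = ⟨k + 1, h⟩ := by
  have hl : (k : ℕ) + 1 = l := Nat.covBy_iff_add_one_eq.1 (Fin.covBy_iff.1 hkl)
  exact ⟨hl ▸ l.isLt, Fin.ext hl.symm⟩

theorem admissibleSwap_comp_swap (hkl : k ⋖ l) (hadj : ¬ (hasse ℕ).Adj (i k) (i l)) :
    AdmissibleSwap i (i ∘ swap k l) := by
  obtain ⟨hk, rfl⟩ := exists_eq_mk_succ_of_covBy hkl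
  rw [hasse_nat_adj, not_or] at hadj
  exact ⟨k, hk, hadj.2, hadj.1, rfl⟩

theorem splittable_iff_forall_splittableBetween :
    Splittable i ↔ ∀ k l, k < l → SplittableBetween (hasse ℕ) i k l := by
  refine forall₃_congr fun k l _ => forall_congr' fun _ => ?_
  refine ⟨fun ⟨hzero, hpos⟩ c hc => ?_, fun h => ?_⟩
  · have hoccurs : ∃ a, k < a ∧ a < l ∧ i a = c := by
      obtain rfl | hpred := hasse_nat_adj.1 hc
      · obtain hk | hk := (i k).eq_zero_or_pos
        · simpa only [hk] using hzero hk
        · exact (hpos hk).2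
      · simpa only [hpred, Nat.add_right_cancel_iff] using (hpos (by omega)).1
    obtain ⟨a, hka, hal, ha⟩ := hoccurs
    exact ⟨a, ⟨hka, hal⟩, ha⟩
  · have hoccurs : ∀ c, (c = i k + 1 ∨ i k = c + 1) → ∃ a, k < a ∧ a < l ∧ i a = c := fun c hc =>
      let ⟨a, ⟨hka, hal⟩, ha⟩ := h (hasse_nat_adj.2 hc)
      ⟨a, hka, hal, ha⟩
    refine ⟨fun hzero => hoccurs 1 (.inl (by omega)), fun hpos => ⟨?_, hoccurs _ (.inl rfl)⟩⟩
    obtain ⟨a, hka, hal, ha⟩ := hoccurs (i k - 1) (.inr (by omega))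
    exact ⟨a, hka, hal, by omega⟩

theorem ne_of_covBy_of_forall_ne (hkl : k ⋖ l)
    (hne : ∀ (k : ℕ) (hk : k + 1 < n), i ⟨k, Nat.lt_of_succ_lt hk⟩ ≠ i ⟨k + 1, hk⟩) :
    i k ≠ i l := by
  obtain ⟨hk, rfl⟩ := exists_eq_mk_succ_of_covBy hkl
  exact hne k hk

theorem neighborSet_subset_singleton_of_covBy {m : Fin n} (hkm : k ⋖ m) (hml : m ⋖ l)
    (heq : i k = i l)
    (hbraid : ∀ (k : ℕ) (hk : k + 2 < n), i ⟨k, by omega⟩ = i ⟨k + 2, hk⟩ →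
      i ⟨k, by omega⟩ = 0 ∧ i ⟨k + 1, by omega⟩ = 1) :
    (hasse ℕ).neighborSet (i k) ⊆ {i m} := by
  obtain ⟨_, rfl⟩ := exists_eq_mk_succ_of_covBy hkm
  obtain ⟨hk, rfl⟩ := exists_eq_mk_succ_of_covBy hml
  obtain ⟨hzero, hone⟩ : i k = 0 ∧ _ := hbraid k hk heq
  intro c hc
  have hc : c = i k + 1 ∨ i k = c + 1 := hasse_nat_adj.1 hc
  rw [Set.mem_singleton_iff, hone]
  omega

end Hasse

theorem splittable_of_closed_set {n : ℕ} (X : Set (Fin n → ℕ))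
    (hne : X.Nonempty)
    (h1 : ∀ i ∈ X, ∀ j, AdmissibleSwap i j → j ∈ X)
    (h2 : ∀ i ∈ X, ∀ (k : ℕ) (hk : k + 1 < n),
      i ⟨k, Nat.lt_of_succ_lt hk⟩ ≠ i ⟨k + 1, hk⟩)
    (h3 : ∀ i ∈ X, ∀ (k : ℕ) (hk : k + 2 < n),
      i ⟨k, by omega⟩ = i ⟨k + 2, hk⟩ →
      i ⟨k, by omega⟩ = 0 ∧ i ⟨k + 1, by omega⟩ = 1) :
    ∀ i ∈ X, Splittable i := by
  simp only [splittable_iff_forall_splittableBetween]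
  exact splittable_of_closed_set_general encard_neighborSet_hasse_le_two X
    (fun i hi _ _ hkl hadj => h1 i hi _ (admissibleSwap_comp_swap hkl hadj))
    (fun i hi _ _ hkl => ne_of_covBy_of_forall_ne hkl (h2 i hi))
    (fun i hi _ _ _ hkm hml heq => neighborSet_subset_singleton_of_covBy hkm hml heq (h3 i hi))
end

section
/- Let p ≥ 3 be odd, m = (p−1)/2, let i ∈ W'(n,p) admit 1 ≤ k < l ≤ n with 1 ≤ i_k = i_l ≤ m−1 and i_k − 1 ∉ {i_{k+1},…,i_{l−1}}, let u be the minimal such common value, and let 1 ≤ r_0 < r_1 < … < r_{m−1−u} < q < t_{m−1−u} < … < t_1 < t_0 ≤ n be the unique sequence with i_q = m, i_{r_j} = i_{t_j} = u + j (0 ≤ j ≤ m−1−u), i_a ≠ u−1 for r_0 ≤ a ≤ t_0, and i_b ≤ u−1 for b outside this sequence. Let î ∈ ℕ^{n−p+2u+1} be the tuple obtained from i by deleting the entries at positions r_1, …, r_{m−1−u}, q, t_{m−1−u}, …, t_1, t_0 (keeping position r_0). Then: (1) î has exactly one entry equal to u and all its other entries are strictly less than u; (2) î is splittable. -/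
/-- The second alternative in condition (b) of the definition of `W'(n,p)`
(with `m = (p−1)/2`): there is a sequence
`k ≤ r_0 < … < r_{m−1−i_k} < q < t_{m−1−i_k} < … < t_0 ≤ l` with `i q = m`,
`i (r j) = i (t j) = i k + j`, and `i k + j` not occurring strictly between
`r j` and `t j`. -/
def SpecialBetween {n : ℕ} (m : ℕ) (i : Fin n → ℕ) (k l : Fin n) : Prop :=
  ∃ (r t : Fin (m - i k) → Fin n) (q : Fin n),
    StrictMono r ∧ StrictAnti t ∧
    (∀ j, k ≤ r j ∧ r j < q) ∧ (∀ j, q < t j ∧ t j ≤ l) ∧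
    k ≤ q ∧ q ≤ l ∧ i q = m ∧
    (∀ j, i (r j) = i k + (j : ℕ) ∧ i (t j) = i k + (j : ℕ)) ∧
    (∀ j, ∀ a : Fin n, r j < a → a < t j → i a ≠ i k + (j : ℕ))

/-- The set `W'(n,p)` of tuples in `{0,…,(p−1)/2}^n`. -/
def WPrime (n p : ℕ) (i : Fin n → ℕ) : Prop :=
  (∀ k, i k ≤ (p - 1) / 2) ∧
  ∀ k l : Fin n, k < l → i k = i l →
    (i k = 0 → ∃ a, k < a ∧ a < l ∧ i a = 1) ∧
    (1 ≤ i k →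
      ((∃ a, k < a ∧ a < l ∧ i a + 1 = i k) ∧ (∃ a, k < a ∧ a < l ∧ i a = i k + 1)) ∨
      SpecialBetween ((p - 1) / 2) i k l)

/-- `v` is a common value `1 ≤ v ≤ m − 1` of two entries `i k = i l = v` (`k < l`)
such that `v − 1` does not occur strictly between them. -/
def BadPair {n : ℕ} (m : ℕ) (i : Fin n → ℕ) (v : ℕ) : Prop :=
  ∃ k l : Fin n, k < l ∧ i k = v ∧ i l = v ∧ 1 ≤ v ∧ v + 1 ≤ m ∧
    ∀ a : Fin n, k < a → a < l → i a + 1 ≠ v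

/-- The sequence `1 ≤ r_0 < r_1 < … < r_{m−1−u} < q < t_{m−1−u} < … < t_1 < t_0 ≤ n`
of Lemma 5.10(1): (a) `i q = m` and `i (r j) = i (t j) = u + j`;
(b) `i a ≠ u − 1` for all `r_0 ≤ a ≤ t_0`; (c) `i b ≤ u − 1` for every index `b`
not occurring in the sequence. -/
def GoodSeq {n : ℕ} (m u : ℕ) (i : Fin n → ℕ)
    (r t : Fin (m - u) → Fin n) (q : Fin n) : Prop :=
  StrictMono r ∧ StrictAnti t ∧
  (∀ j, r j < q) ∧ (∀ j, q < t j) ∧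
  i q = m ∧
  (∀ j, i (r j) = u + (j : ℕ) ∧ i (t j) = u + (j : ℕ)) ∧
  (∀ j, ∀ a : Fin n, r j ≤ a → a ≤ t j → i a + 1 ≠ u) ∧
  (∀ a : Fin n, (∀ j, a ≠ r j ∧ a ≠ t j) → a ≠ q → i a + 1 ≤ u)

/-!
All repeated values of `î` are smaller than `u`. For such a value `v`, minimality of `u` puts
`v - 1` between any two occurrences (if `v ≠ 0`), and `i ∈ W'(n,p)` puts `v + 1` there: in the
second alternative of (b) the sequence passes through `v + 1`. Deletion removes no entry smaller
than `u`, so the only witness that can be lost is a `v + 1 = u`. All occurrences of `u` lie in one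
interval free of `u - 1`, so two occurrences of `u - 1` enclosing one occurrence of `u` enclose them
all, in particular the one that is kept.
-/

/-- The condition of `Splittable` imposed only on repeated values smaller than `u`. The cases
`i k = 0` and `1 ≤ i k` are merged: in both of them `i k + 1` has to occur between `k` and `l`. -/
def SplittableBelow {n : ℕ} (u : ℕ) (i : Fin n → ℕ) : Prop :=
  ∀ ⦃k l : Fin n⦄, k < l → i k = i l → i k < u →
    (∃ a ∈ Set.Ioo k l, i a = i k + 1) ∧ (i k ≠ 0 → ∃ a ∈ Set.Ioo k l, i a + 1 = i k)

theorem exists_kept_mem_Ioo {n u : ℕ} {i : Fin n → ℕ} {s : Fin n} (hs : i s = u)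
    (hgap : ∀ a, i a = u → ∀ b ∈ Set.uIcc s a, i b + 1 ≠ u)
    {k l a : Fin n} (hik : i k = i l) (hku : i k < u) (hakl : a ∈ Set.Ioo k l)
    (ha : i a = i k + 1) :
    ∃ c ∈ insert s {b | i b < u}, c ∈ Set.Ioo k l ∧ i c = i k + 1 := by
  rcases (ha.trans_le hku).lt_or_eq with hau | hau
  · exact ⟨a, Or.inr hau, hakl, ha⟩
  · have hks : k < s := by
      by_contra! hsk
      exact hgap a hau k (Set.Icc_subset_uIcc ⟨hsk, hakl.1.le⟩) (by omega)
    have hsl : s < l := by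
      by_contra! hls
      exact hgap a hau l (Set.Icc_subset_uIcc' ⟨hakl.2.le, hls⟩) (by omega)
    exact ⟨s, Or.inl rfl, ⟨hks, hsl⟩, by omega⟩

namespace SplittableBelow

variable {n u : ℕ} {i : Fin n → ℕ}

theorem splittable (hi : SplittableBelow u i)
    (hlt : ∀ ⦃k l : Fin n⦄, k < l → i k = i l → i k < u) : Splittable i := by
  intro k l hkl hik
  obtain ⟨⟨a, ⟨hka, hal⟩, ha⟩, hpred⟩ := hi hkl hik (hlt hkl hik)
  refine ⟨fun h0 => ⟨a, hka, hal, by omega⟩, fun h1 => ⟨?_, a, hka, hal, ha⟩⟩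
  obtain ⟨b, ⟨hkb, hbl⟩, hb⟩ := hpred (by omega)
  exact ⟨b, hkb, hbl, hb⟩

theorem comp_strictMono (hi : SplittableBelow u i) {s : Fin n} (hs : i s = u)
    (hgap : ∀ a, i a = u → ∀ b ∈ Set.uIcc s a, i b + 1 ≠ u)
    {n₀ : ℕ} {e : Fin n₀ → Fin n} (he : StrictMono e)
    (hrange : insert s {a | i a < u} ⊆ Set.range e) : SplittableBelow u (i ∘ e) := by
  have lift : ∀ ⦃k l : Fin n₀⦄, ∀ c ∈ insert s {a | i a < u}, c ∈ Set.Ioo (e k) (e l) →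
      ∃ b ∈ Set.Ioo k l, e b = c := by
    rintro k l c hc ⟨hkc, hcl⟩
    obtain ⟨b, rfl⟩ := hrange hc
    exact ⟨b, ⟨he.lt_iff_lt.1 hkc, he.lt_iff_lt.1 hcl⟩, rfl⟩
  intro k l hkl hik hku
  obtain ⟨⟨a, hakl, ha⟩, hpred⟩ := hi (he hkl) hik hku
  refine ⟨?_, fun h0 => ?_⟩
  · obtain ⟨c, hc, hckl, hci⟩ := exists_kept_mem_Ioo hs hgap hik hku hakl ha
    obtain ⟨b, hb, rfl⟩ := lift c hc hckl
    exact ⟨b, hb, hci⟩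
  · obtain ⟨c, hckl, hc⟩ := hpred h0
    obtain ⟨b, hb, rfl⟩ := lift c (Or.inr ((Nat.lt_of_succ_le hc.le).trans hku)) hckl
    exact ⟨b, hb, hc⟩

end SplittableBelow

theorem SpecialBetween.exists_succ {n m : ℕ} {i : Fin n → ℕ} {k l : Fin n}
    (h : SpecialBetween m i k l) (hkm : i k < m) : ∃ a ∈ Set.Ioo k l, i a = i k + 1 := by
  obtain ⟨r, t, q, hr, -, hkrq, hqtl, -, -, hq, hval, -⟩ := h
  have hkr₀ := (hkrq ⟨0, by omega⟩).1
  have hql : q < l := (hqtl ⟨0, by omega⟩).1.trans_le (hqtl _).2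
  obtain hkm | hkm : i k + 1 < m ∨ i k + 1 = m := by omega
  · have hr₀₁ : r ⟨0, by omega⟩ < r ⟨1, by omega⟩ := hr (Fin.mk_lt_mk.2 one_pos)
    exact ⟨_, ⟨hkr₀.trans_lt hr₀₁, (hkrq _).2.trans hql⟩, (hval _).1⟩
  · exact ⟨q, ⟨hkr₀.trans_lt (hkrq _).2, hql⟩, by omega⟩

theorem exists_pred_of_not_badPair {n m : ℕ} {i : Fin n → ℕ} {k l : Fin n}
    (h : ¬BadPair m i (i k)) (hkl : k < l) (hik : i k = i l) (h0 : i k ≠ 0) (hkm : i k < m) :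
    ∃ a ∈ Set.Ioo k l, i a + 1 = i k := by
  by_contra! hno
  exact h ⟨k, l, hkl, rfl, hik.symm, Nat.one_le_iff_ne_zero.2 h0, hkm,
    fun a hka hal => hno a ⟨hka, hal⟩⟩

namespace WPrime

variable {n p : ℕ} {i : Fin n → ℕ}

theorem exists_succ (hi : WPrime n p i) {k l : Fin n} (hkl : k < l) (hik : i k = i l)
    (hkm : i k < (p - 1) / 2) : ∃ a ∈ Set.Ioo k l, i a = i k + 1 := by
  obtain ⟨hzero, hpos⟩ := hi.2 k l hkl hik
  rcases Nat.eq_zero_or_pos (i k) with h0 | h1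
  · obtain ⟨a, hka, hal, ha⟩ := hzero h0
    exact ⟨a, ⟨hka, hal⟩, by omega⟩
  · rcases hpos h1 with ⟨-, a, hka, hal, ha⟩ | hspecial
    · exact ⟨a, ⟨hka, hal⟩, ha⟩
    · exact hspecial.exists_succ hkm

theorem splittableBelow (hi : WPrime n p i) {u : ℕ} (hu : u ≤ (p - 1) / 2)
    (hmin : u ∈ lowerBounds {v | BadPair ((p - 1) / 2) i v}) : SplittableBelow u i :=
  fun _ _ hkl hik hku => ⟨hi.exists_succ hkl hik (hku.trans_le hu), fun h0 =>
    exists_pred_of_not_badPair (fun hbad => (hmin hbad).not_gt hku) hkl hik h0 (hku.trans_le hu)⟩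

end WPrime

namespace GoodSeq

variable {n m u : ℕ} {i : Fin n → ℕ} {r t : Fin (m - u) → Fin n} {q : Fin n}

theorem lt_or_exists_eq (h : GoodSeq m u i r t q) (a : Fin n) :
    i a < u ∨ (∃ j, a = r j) ∨ (∃ j, a = t j) ∨ a = q := by
  obtain ⟨-, -, -, -, -, -, -, hout⟩ := h
  by_contra! hc
  obtain ⟨hau, har, hat, haq⟩ := hc
  exact (hout a (fun j => ⟨har j, hat j⟩) haq).not_gt (Nat.lt_succ_of_le hau)

variable [NeZero (m - u)]

theorem apply_left_zero (h : GoodSeq m u i r t q) : i (r 0) = u := by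
  obtain ⟨-, -, -, -, -, hval, -⟩ := h
  simpa using (hval 0).1

theorem left_zero_lt_right_zero (h : GoodSeq m u i r t q) : r 0 < t 0 := by
  obtain ⟨-, -, hrq, hqt, -⟩ := h
  exact (hrq 0).trans (hqt 0)

theorem eq_left_zero_or_eq_right_zero (h : GoodSeq m u i r t q) {a : Fin n} (ha : i a = u) :
    a = r 0 ∨ a = t 0 := by
  have hum : m - u ≠ 0 := NeZero.ne _
  have hcases := h.lt_or_exists_eq a
  obtain ⟨-, -, -, -, hq, hval, -, -⟩ := h
  rcases hcases with hau | ⟨j, rfl⟩ | ⟨j, rfl⟩ | rfl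
  · omega
  · obtain rfl : j = 0 := Fin.val_eq_zero_iff.1 (by have := (hval j).1; omega)
    exact Or.inl rfl
  · obtain rfl : j = 0 := Fin.val_eq_zero_iff.1 (by have := (hval j).2; omega)
    exact Or.inr rfl
  · omega

theorem succ_ne_of_mem_uIcc (h : GoodSeq m u i r t q) {a b : Fin n} (ha : i a = u)
    (hb : b ∈ Set.uIcc (r 0) a) : i b + 1 ≠ u := by
  have hrt := h.left_zero_lt_right_zero.le
  have haI : a ∈ Set.Icc (r 0) (t 0) := by
    rcases h.eq_left_zero_or_eq_right_zero ha with rfl | rfl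
    · exact Set.left_mem_Icc.2 hrt
    · exact Set.right_mem_Icc.2 hrt
  have hbI : b ∈ Set.Icc (r 0) (t 0) := Set.uIcc_subset_Icc (Set.left_mem_Icc.2 hrt) haI hb
  obtain ⟨-, -, -, -, -, -, hno, -⟩ := h
  exact hno 0 b hbI.1 hbI.2

theorem setOf_kept_eq_insert (h : GoodSeq m u i r t q) :
    {a : Fin n | (∀ j : Fin (m - u), j.val ≠ 0 → a ≠ r j) ∧ (∀ j, a ≠ t j) ∧ a ≠ q} =
      insert (r 0) {a | i a < u} := by
  have hum : m - u ≠ 0 := NeZero.ne _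
  ext a
  have hcases := h.lt_or_exists_eq a
  obtain ⟨hr, -, hrq, hqt, hq, hval, -, -⟩ := h
  constructor
  · rintro ⟨har, hat, haq⟩
    rcases hcases with hau | ⟨j, rfl⟩ | ⟨j, rfl⟩ | rfl
    · exact Or.inr hau
    · have hj : j.val = 0 := by_contra fun hj => har j hj rfl
      exact Or.inl (congrArg r (Fin.val_eq_zero_iff.1 hj))
    · exact absurd rfl (hat j)
    · exact absurd rfl haq
  · rintro (rfl | hau)
    · refine ⟨fun j hj h0 => hj ?_, fun j => ((hrq 0).trans (hqt j)).ne, (hrq 0).ne⟩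
      simp [← hr.injective h0]
    · have hau : i a < u := hau
      refine ⟨?_, ?_, ?_⟩
      · rintro j - rfl
        have := (hval j).1
        omega
      · rintro j rfl
        have := (hval j).2
        omega
      · rintro rfl
        omega

end GoodSeq

section Deletion

variable {n n₀ u : ℕ} {i : Fin n → ℕ} {s : Fin n} {e : Fin n₀ → Fin n}

theorem existsUnique_apply_eq_of_range_eq_insert (hs : i s = u) (he : Function.Injective e)
    (hrange : Set.range e = insert s {a | i a < u}) : ∃! a, i (e a) = u := by
  obtain ⟨a, ha⟩ : s ∈ Set.range e := hrange ▸ Set.mem_insert s _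
  refine ⟨a, by simpa only [ha] using hs, fun b hb => he ?_⟩
  rcases hrange.subset ⟨b, rfl⟩ with h | h
  · exact h.trans ha.symm
  · exact absurd hb (ne_of_lt h)

theorem deleted_tuple_splittable_general (hi : SplittableBelow u i) (hs : i s = u)
    (hgap : ∀ a, i a = u → ∀ b ∈ Set.uIcc s a, i b + 1 ≠ u) (he : StrictMono e)
    (hrange : Set.range e = insert s {a | i a < u}) :
    (∃! a : Fin n₀, i (e a) = u) ∧
    (∀ a : Fin n₀, i (e a) ≠ u → i (e a) < u) ∧
    Splittable (fun a => i (e a)) := by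
  have hunique := existsUnique_apply_eq_of_range_eq_insert hs he.injective hrange
  have hlt : ∀ a, i (e a) ≠ u → i (e a) < u := fun a ha =>
    (hrange.subset ⟨a, rfl⟩).resolve_left fun h => ha (h ▸ hs)
  have hbelow := hi.comp_strictMono hs hgap he hrange.superset
  refine ⟨hunique, hlt, hbelow.splittable fun k l hkl hik => hlt k fun hk => ?_⟩
  exact hkl.ne (hunique.unique hk (hik.symm.trans hk))

end Deletion

/-- deleting from `i` the entries at positions
`r_1, …, r_{m−1−u}, q, t_{m−1−u}, …, t_1, t_0` (keeping `r_0`) — encoded by the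
strictly monotone enumeration `e` of the remaining positions — yields a tuple
`î = i ∘ e` of length `n − p + 2u + 1` which (1) has exactly one entry equal to
`u`, all other entries being strictly less than `u`, and (2) is splittable. -/
theorem deleted_tuple_splittable (n p m u : ℕ) (hp : p = 2 * m + 1) (h3 : 3 ≤ p)
    (i : Fin n → ℕ) (hi : WPrime n p i)
    (hu : IsLeast {v | BadPair m i v} u)
    (r t : Fin (m - u) → Fin n) (q : Fin n) (hseq : GoodSeq m u i r t q)
    (n₀ : ℕ) (hn₀ : n₀ + (p - 1 - 2 * u) = n)
    (e : Fin n₀ → Fin n) (he : StrictMono e)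
    (hrange : Set.range e =
      {a : Fin n | (∀ j : Fin (m - u), j.val ≠ 0 → a ≠ r j) ∧
        (∀ j, a ≠ t j) ∧ a ≠ q}) :
    (∃! a : Fin n₀, i (e a) = u) ∧
    (∀ a : Fin n₀, i (e a) ≠ u → i (e a) < u) ∧
    Splittable (fun a => i (e a)) := by
  obtain ⟨_, _, -, -, -, -, hum, -⟩ := hu.1
  have : NeZero (m - u) := ⟨by omega⟩
  obtain rfl : m = (p - 1) / 2 := by omega
  exact deleted_tuple_splittable_general (hi.splittableBelow (Nat.le_of_succ_le hum) hu.2)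
    hseq.apply_left_zero (fun _ ha _ hb => hseq.succ_ne_of_mem_uIcc ha hb) he
    (hrange.trans hseq.setOf_kept_eq_insert)
end
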